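/- Let h, t, α be positive integers, let a_1, …, a_h be integers coprime to α, and let b, s ∈ {0, …, α−1}. Let N be the number of tuples (x_1, …, x_h) ∈ {0, …, tα+s}^h satisfying a_1x_1 + ⋯ + a_hx_h ≡ b (mod α), and let δ be the number of tuples (y_1, …, y_h) ∈ {0, …, s}^h satisfying a_1y_1 + ⋯ + a_hy_h ≡ b (mod α). Then N = ((tα+s+1)^h − (s+1)^h)/α + δ, and moreover 0 ≤ δ ≤ (s+1)^{h−1}. -/

import Mathlib

/-! Give a box with side lengths `nᵢ` the discrepancy `α · #solutions - ∏ nᵢ`. If one coordinate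
ranges over `α` consecutive integers, the other coordinates of a solution are arbitrary and
determine that one, so lengthening a side by `α` does not change the discrepancy. Comparing the
boxes with sides `tᵢα + mᵢ` and `mᵢ` gives the formula; the bound holds because a coordinate that
ranges over at most `α` consecutive integers is determined by the others. -/

open Finset Function

section LinearCongruence

lemma exists_mem_Ico_mul_add_modEq {α : ℕ} (hα : 0 < α) {c : ℤ} (hc : IsCoprime c α)
    (u b : ℤ) (k : ℕ) : ∃ x ∈ Ico k (k + α), c * (x : ℤ) + u ≡ b [ZMOD α] := by
  obtain ⟨p, q, hpq⟩ := hc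
  obtain ⟨r, hr, hr_modEq⟩ := Int.existsUnique_equiv_nat (p * (b - u)) (Int.natCast_pos.2 hα)
  obtain ⟨x, hx, rfl⟩ : ∃ x ∈ Ico k (k + α), x % α = r := by
    rw [← mem_image, Nat.image_Ico_mod, mem_range]
    exact_mod_cast hr
  have hx_modEq : (x : ℤ) ≡ p * (b - u) [ZMOD α] :=
    (Int.natCast_modEq_iff.2 (Nat.mod_modEq x α)).symm.trans hr_modEq
  refine ⟨x, hx, ((hx_modEq.mul_left c).add_right u).trans ?_⟩
  rw [Int.modEq_iff_dvd]
  exact ⟨q * (b - u), by linear_combination (-(b - u)) * hpq⟩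

lemma modEq_of_mul_add_modEq_mul_add {α : ℕ} {c : ℤ} (hc : IsCoprime c α) {u : ℤ} {x y : ℕ}
    (h : c * (x : ℤ) + u ≡ c * (y : ℤ) + u [ZMOD α]) : x ≡ y [MOD α] := by
  rw [← Int.natCast_modEq_iff, Int.modEq_iff_dvd]
  refine hc.symm.dvd_of_dvd_mul_left ?_
  rw [mul_sub]
  exact (h.add_right_cancel' u).dvd

end LinearCongruence

section BoxSolutions

variable {ι : Type*} [Fintype ι] [DecidableEq ι]

/-- The solutions of the linear congruence `∑ aᵢxᵢ ≡ b (mod α)` whose coordinates are confined to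
the sets `A i`. -/
def congruenceSolutions (α : ℕ) (a : ι → ℤ) (b : ℤ) (A : ι → Finset ℕ) : Finset (ι → ℕ) :=
  {x ∈ Fintype.piFinset A | ∑ i, a i * (x i : ℤ) ≡ b [ZMOD (α : ℤ)]}

/-- The discrepancy of the box with side lengths `n i`: the excess of its number of solutions over
the expected number `(∏ i, n i) / α`, multiplied by `α` so as to be an integer. -/
def boxDiscrepancy (α : ℕ) (a : ι → ℤ) (b : ℤ) (n : ι → ℕ) : ℤ :=
  α * #(congruenceSolutions α a b fun i ↦ range (n i)) - ∏ i, (n i : ℤ)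

variable {α : ℕ} {a : ι → ℤ} {b : ℤ} {A : ι → Finset ℕ} {i : ι}

lemma mem_congruenceSolutions {x : ι → ℕ} :
    x ∈ congruenceSolutions α a b A ↔
      (∀ j, x j ∈ A j) ∧ ∑ j, a j * (x j : ℤ) ≡ b [ZMOD (α : ℤ)] := by
  simp only [congruenceSolutions, mem_filter, Fintype.mem_piFinset]

lemma sum_mul_update (a : ι → ℤ) (x : ι → ℕ) (i : ι) (c : ℕ) :
    ∑ j, a j * (update x i c j : ℤ) = a i * c + ∑ j ∈ univ.erase i, a j * (x j : ℤ) := by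
  rw [← add_sum_erase univ _ (mem_univ i), update_self]
  congr 1
  refine sum_congr rfl fun j hj ↦ ?_
  rw [update_of_ne (ne_of_mem_erase hj)]

lemma card_congruenceSolutions_le (hai : IsCoprime (a i) α)
    (hA : Set.InjOn (· % α) (A i : Set ℕ)) :
    #(congruenceSolutions α a b A) ≤ ∏ j ∈ univ.erase i, #(A j) := by
  obtain hAi | ⟨c, hc⟩ := (A i).eq_empty_or_nonempty
  · simp [congruenceSolutions, Fintype.piFinset_eq_empty.2 ⟨i, hAi⟩]
  rw [← Fintype.card_filter_piFinset_eq_of_mem A i hc]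
  refine card_le_card_of_injOn (update · i c) (fun x hx ↦ ?_) fun x hx y hy hxy ↦ ?_
  · obtain ⟨hxA, -⟩ := mem_congruenceSolutions.1 hx
    grind
  obtain ⟨hxA, hx_sum⟩ := mem_congruenceSolutions.1 hx
  obtain ⟨hyA, hy_sum⟩ := mem_congruenceSolutions.1 hy
  have hx_eq : x = update y i (x i) := by
    simpa only [update_idem, update_eq_self] using congrArg (update · i (x i)) hxy
  have hsum : a i * (x i : ℤ) + ∑ j ∈ univ.erase i, a j * (y j : ℤ) ≡
      a i * (y i : ℤ) + ∑ j ∈ univ.erase i, a j * (y j : ℤ) [ZMOD α] := by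
    rw [← sum_mul_update, ← sum_mul_update, ← hx_eq, update_eq_self]
    exact hx_sum.trans hy_sum.symm
  have hxy_i : x i = y i := hA (hxA i) (hyA i) (modEq_of_mul_add_modEq_mul_add hai hsum)
  rw [hx_eq, hxy_i, update_eq_self]

lemma prod_erase_le_card_congruenceSolutions (hα : 0 < α) (hai : IsCoprime (a i) α) {k : ℕ}
    (hA : A i = Ico k (k + α)) :
    ∏ j ∈ univ.erase i, #(A j) ≤ #(congruenceSolutions α a b A) := by
  have hk : k ∈ A i := by simp [hA, hα]
  rw [← Fintype.card_filter_piFinset_eq_of_mem A i hk]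
  refine card_le_card_of_surjOn (update · i k) fun y hy ↦ ?_
  simp only [coe_filter, Set.mem_ofPred_eq, Fintype.mem_piFinset] at hy
  obtain ⟨c, hc, hc_sum⟩ :=
    exists_mem_Ico_mul_add_modEq hα hai (∑ j ∈ univ.erase i, a j * (y j : ℤ)) b k
  refine ⟨update y i c, mem_congruenceSolutions.2 ⟨?_, ?_⟩, ?_⟩
  · rw [← hA] at hc
    grind
  · rwa [sum_mul_update]
  · simp [← hy.2]

lemma card_congruenceSolutions_of_eq_Ico (hα : 0 < α) (hai : IsCoprime (a i) α) {k : ℕ}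
    (hA : A i = Ico k (k + α)) :
    #(congruenceSolutions α a b A) = ∏ j ∈ univ.erase i, #(A j) :=
  (card_congruenceSolutions_le hai (hA ▸ Nat.mod_injOn_Ico k α)).antisymm
    (prod_erase_le_card_congruenceSolutions hα hai hA)

lemma card_congruenceSolutions_update_union {s t : Finset ℕ} (hst : Disjoint s t) :
    #(congruenceSolutions α a b (update A i (s ∪ t))) =
      #(congruenceSolutions α a b (update A i s)) +
        #(congruenceSolutions α a b (update A i t)) := by
  rw [← card_union_of_disjoint]
  · congr 1
    ext x
    simp only [mem_union, mem_congruenceSolutions, forall_update_iff A fun j s ↦ x j ∈ s]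
    tauto
  · refine disjoint_left.2 fun x hxs hxt ↦ ?_
    have hxi_s : x i ∈ s := by simpa using (mem_congruenceSolutions.1 hxs).1 i
    have hxi_t : x i ∈ t := by simpa using (mem_congruenceSolutions.1 hxt).1 i
    exact disjoint_left.1 hst hxi_s hxi_t

lemma card_congruenceSolutions_range_add_single (hα : 0 < α) (hai : IsCoprime (a i) α)
    (n : ι → ℕ) :
    #(congruenceSolutions α a b fun j ↦ range ((n + Pi.single i α : ι → ℕ) j)) =
      #(congruenceSolutions α a b fun j ↦ range (n j)) + ∏ j ∈ univ.erase i, n j := by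
  let A : ι → Finset ℕ := fun j ↦ range (n j)
  have hdisj : Disjoint (range (n i)) (Ico (n i) (n i + α)) := by
    rw [range_eq_Ico]
    exact Ico_disjoint_Ico_consecutive _ _ _
  have hlong : (fun j ↦ range ((n + Pi.single i α : ι → ℕ) j)) =
      update A i (range (n i) ∪ Ico (n i) (n i + α)) := by
    grind [Pi.add_apply]
  have hslab : #(congruenceSolutions α a b (update A i (Ico (n i) (n i + α)))) =
      ∏ j ∈ univ.erase i, n j := by
    rw [card_congruenceSolutions_of_eq_Ico hα hai (update_self ..)]
    refine prod_congr rfl fun j hj ↦ ?_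
    rw [update_of_ne (ne_of_mem_erase hj), card_range]
  rw [hlong, card_congruenceSolutions_update_union hdisj, hslab, update_eq_self]

lemma boxDiscrepancy_periodic_single (hα : 0 < α) (hai : IsCoprime (a i) α) :
    Periodic (boxDiscrepancy α a b) (Pi.single i α) := by
  intro n
  have hprod : ∏ j, (((n + Pi.single i α : ι → ℕ) j : ℕ) : ℤ) =
      ∏ j, (n j : ℤ) + α * ∏ j ∈ univ.erase i, (n j : ℤ) := by
    have herase : ∏ j ∈ univ.erase i, (((n + Pi.single i α : ι → ℕ) j : ℕ) : ℤ) =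
        ∏ j ∈ univ.erase i, (n j : ℤ) :=
      prod_congr rfl fun j hj ↦ by simp [ne_of_mem_erase hj]
    rw [← mul_prod_erase univ _ (mem_univ i), herase, ← mul_prod_erase univ _ (mem_univ i)]
    simp [add_mul]
  rw [boxDiscrepancy, boxDiscrepancy, card_congruenceSolutions_range_add_single hα hai, hprod]
  push_cast
  ring

lemma boxDiscrepancy_periodic (hα : 0 < α) (ha : ∀ i, IsCoprime (a i) (α : ℤ)) (t : ι → ℕ) :
    Periodic (boxDiscrepancy α a b) fun i ↦ t i * α := by
  rw [← univ_sum_single fun i ↦ t i * α]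
  refine sum_induction _ (Periodic (boxDiscrepancy α a b)) (fun _ _ ↦ Periodic.add_period)
    (fun n ↦ by rw [add_zero]) fun i _ ↦ ?_
  rw [← smul_eq_mul, Pi.single_smul]
  exact (boxDiscrepancy_periodic_single hα (ha i)).nsmul (t i)

lemma card_congruenceSolutions_range_le (hai : IsCoprime (a i) α) {n : ι → ℕ} (hn : n i ≤ α) :
    #(congruenceSolutions α a b fun j ↦ range (n j)) ≤ ∏ j ∈ univ.erase i, n j := by
  have hinj : Set.InjOn (· % α) (range (n i) : Set ℕ) := by
    refine (Nat.mod_injOn_Ico 0 α).mono ?_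
    simpa [← range_eq_Ico] using hn
  simpa only [card_range] using
    card_congruenceSolutions_le (A := fun j ↦ range (n j)) hai hinj

lemma card_congruenceSolutions_range_mul_add (hα : 0 < α) (ha : ∀ i, IsCoprime (a i) (α : ℤ))
    (t m : ι → ℕ) :
    #(congruenceSolutions α a b fun i ↦ range (t i * α + m i)) =
      (∏ i, (t i * α + m i) - ∏ i, m i) / α + #(congruenceSolutions α a b fun i ↦ range (m i)) := by
  set N := #(congruenceSolutions α a b fun i ↦ range (t i * α + m i))
  set δ := #(congruenceSolutions α a b fun i ↦ range (m i))
  have hdiscrepancy : (α : ℤ) * N - ∏ i, ((t i * α + m i : ℕ) : ℤ) =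
      α * δ - ∏ i, (m i : ℤ) := by
    simpa only [boxDiscrepancy, Pi.add_apply, add_comm (m _)] using
      boxDiscrepancy_periodic (b := b) hα ha t m
  have hprod : ∏ i, m i ≤ ∏ i, (t i * α + m i) :=
    prod_le_prod' fun i _ ↦ Nat.le_add_left ..
  have hδN : δ ≤ N := by
    refine card_le_card fun x hx ↦ ?_
    grind [mem_congruenceSolutions]
  have hdiff : ∏ i, (t i * α + m i) - ∏ i, m i = α * (N - δ) := by
    zify [hprod, hδN]
    push_cast at hdiscrepancy
    linear_combination -hdiscrepancy
  rw [hdiff, Nat.mul_div_cancel_left _ hα, Nat.sub_add_cancel hδN]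

theorem stmt_1_general (hα : 0 < α) (ha : ∀ i, IsCoprime (a i) (α : ℤ)) (t m : ι → ℕ) :
    #(congruenceSolutions α a b fun i ↦ range (t i * α + m i)) =
        (∏ i, (t i * α + m i) - ∏ i, m i) / α + #(congruenceSolutions α a b fun i ↦ range (m i)) ∧
      ∀ i, m i ≤ α →
        #(congruenceSolutions α a b fun i ↦ range (m i)) ≤ ∏ j ∈ univ.erase i, m j :=
  ⟨card_congruenceSolutions_range_mul_add hα ha t m,
    fun i hi ↦ card_congruenceSolutions_range_le (ha i) hi⟩

end BoxSolutions

/-- Lemma on the number of solutions of `a₁x₁ + ⋯ + a_h x_h ≡ b (mod α)` with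
`xᵢ ∈ {0, …, tα+s}`: it equals `((tα+s+1)^h − (s+1)^h)/α + δ`, where `δ` is the number of
solutions with all coordinates in `{0, …, s}`, and `0 ≤ δ ≤ (s+1)^(h−1)`. -/
theorem stmt_1 (h t α : ℕ) (hh : 0 < h) (ht : 0 < t) (hα : 0 < α)
    (a : Fin h → ℤ) (ha : ∀ i, IsCoprime (a i) (α : ℤ))
    (b s : ℕ) (hb : b < α) (hs : s < α)
    (N δ : ℕ)
    (hN : N = (Finset.filter
        (fun x : Fin h → ℕ => (∑ i, a i * (x i : ℤ)) ≡ (b : ℤ) [ZMOD (α : ℤ)])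
        (Fintype.piFinset fun _ => Finset.range (t * α + s + 1))).card)
    (hδ : δ = (Finset.filter
        (fun y : Fin h → ℕ => (∑ i, a i * (y i : ℤ)) ≡ (b : ℤ) [ZMOD (α : ℤ)])
        (Fintype.piFinset fun _ => Finset.range (s + 1))).card) :
    N = ((t * α + s + 1) ^ h - (s + 1) ^ h) / α + δ ∧ δ ≤ (s + 1) ^ (h - 1) := by
  subst hN hδ
  obtain ⟨hcount, hbound⟩ := stmt_1_general hα ha (b := b) (fun _ ↦ t) fun _ ↦ s + 1
  exact ⟨by simpa [congruenceSolutions, add_assoc] using hcount,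
    by simpa [congruenceSolutions] using hbound ⟨0, hh⟩ hs⟩
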